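/- For all x, y, z, w ∈ 𝓡 with x ⪯ z and y ⪯ w, one has x ⊕ y ⪯ z ⊕ w. -/

import Mathlib

/-- The ambient space `𝓡` of decimal representations: an integer part together
with a sequence of digits in `{0,…,9}`. -/
abbrev DecimalRep := ℤ × (ℕ → Fin 10)

namespace DecimalRep

open scoped Classical

/-- The truncation `[x]_k = x₀ + ∑_{i=1}^k x_i / 10^i` of `x` up to the `k`-th
digit, as a rational number. -/
def trunc (x : DecimalRep) (k : ℕ) : ℚ :=
  (x.1 : ℚ) + ∑ i ∈ Finset.range k, ((x.2 i : ℕ) : ℚ) / 10 ^ (i + 1)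

/-- The order `⪯` on `𝓡`: `x ⪯ y` iff every truncation of `x` is at most the
corresponding truncation of `y`. -/
def le (x y : DecimalRep) : Prop := ∀ k : ℕ, trunc x k ≤ trunc y k

/-- The strict order `≺` on `𝓡`. -/
def lt (x y : DecimalRep) : Prop := le x y ∧ x ≠ y

/-- Two decimal representations are equivalent ("have no gap") iff there is no
third element lying between them. -/
def equiv (x y : DecimalRep) : Prop :=
  ¬ ∃ z : DecimalRep, z ≠ x ∧ z ≠ y ∧
      ((le x z ∧ le z y) ∨ (le y z ∧ le z x))

/-- `𝓡₉`: decimal representations ending in an infinite string of nines. -/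
def allNines (x : DecimalRep) : Prop := ∃ N : ℕ, ∀ k ≥ N, x.2 k = 9

/-- `ℚ_F`: decimal representations ending in an infinite string of zeros. -/
def finiteDec (x : DecimalRep) : Prop := ∃ N : ℕ, ∀ k ≥ N, x.2 k = 0

/-- The decimal expansion map `ι : ℚ → 𝓡`, satisfying
`[ι(α)]_k = ⌊10^k·α⌋/10^k` for all `k`. -/
def iota (α : ℚ) : DecimalRep :=
  (⌊α⌋, fun k => ⟨(⌊α * 10 ^ (k + 1)⌋ % 10).toNat, by
    have h1 : (0 : ℤ) ≤ ⌊α * 10 ^ (k + 1)⌋ % 10 := Int.emod_nonneg _ (by norm_num)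
    have h2 : ⌊α * 10 ^ (k + 1)⌋ % 10 < 10 := Int.emod_lt_of_pos _ (by norm_num)
    omega⟩)

/-- `M` is a least upper bound of `W` in `(𝓡,⪯)`. -/
def IsLub (W : Set DecimalRep) (M : DecimalRep) : Prop :=
  (∀ w ∈ W, le w M) ∧ ∀ M' : DecimalRep, (∀ w ∈ W, le w M') → le M M'

/-- `M` is a greatest lower bound of `W` in `(𝓡,⪯)`. -/
def IsGlb (W : Set DecimalRep) (M : DecimalRep) : Prop :=
  (∀ w ∈ W, le M w) ∧ ∀ M' : DecimalRep, (∀ w ∈ W, le M' w) → le M' M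

/-- The least upper bound of a set in `(𝓡,⪯)` (junk value if none exists). -/
noncomputable def sup (W : Set DecimalRep) : DecimalRep :=
  if h : ∃ M, IsLub W M then h.choose else default

/-- The greatest lower bound of a set in `(𝓡,⪯)` (junk value if none exists). -/
noncomputable def inf (W : Set DecimalRep) : DecimalRep :=
  if h : ∃ M, IsGlb W M then h.choose else default

/-- Addition `x ⊕ y := sup {ι([x]_k + [y]_k) : k ∈ ℕ}` on `𝓡`. -/
noncomputable def add (x y : DecimalRep) : DecimalRep :=
  sup { z | ∃ k : ℕ, z = iota (trunc x k + trunc y k) }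

/-- The "additive inverse" map `Ψ(x₀.x₁x₂⋯) = (−1−x₀).(9−x₁)(9−x₂)⋯`. -/
def psi (x : DecimalRep) : DecimalRep :=
  (-1 - x.1, fun k => ⟨9 - (x.2 k).val, by have := (x.2 k).isLt; omega⟩)

/-- The signal map: `0` on the nonnegative part, `1` on the negative part. -/
noncomputable def sign (x : DecimalRep) : ℕ :=
  if le (iota 0) x then 0 else 1

/-- The absolute value `‖x‖ := max {x, Ψ(x)}` with respect to `⪯`. -/
noncomputable def norm (x : DecimalRep) : DecimalRep :=
  if le x (psi x) then psi x else x

/-- Multiplication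
`x ⊗ y := Ψ^(sign x + sign y) (sup {ι([‖x‖]_k · [‖y‖]_k) : k ∈ ℕ})` on `𝓡`. -/
noncomputable def mul (x y : DecimalRep) : DecimalRep :=
  psi^[sign x + sign y]
    (sup { z | ∃ k : ℕ, z = iota (trunc (norm x) k * trunc (norm y) k) })

/-- The multiplicative inverse
`x⁻¹ := Ψ^(sign x) (inf {ι(1/[‖x‖]_k) : k ∈ ℕ, [‖x‖]_k > 0})`. -/
noncomputable def inv (x : DecimalRep) : DecimalRep :=
  psi^[sign x]
    (inf { z | ∃ k : ℕ, 0 < trunc (norm x) k ∧ z = iota (1 / trunc (norm x) k) })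

/-- A sequence of rationals is Cauchy. -/
def IsCauchy (x : ℕ → ℚ) : Prop :=
  ∀ ε : ℚ, 0 < ε → ∃ N : ℕ, ∀ m n : ℕ, N ≤ m → N ≤ n → |x m - x n| < ε

/-- The upper limit `inf { sup {f k : k ≥ n} : n ∈ ℕ }` of a sequence in `𝓡`. -/
noncomputable def upperLimit (f : ℕ → DecimalRep) : DecimalRep :=
  inf { z | ∃ n : ℕ, z = sup { w | ∃ k : ℕ, n ≤ k ∧ w = f k } }

/-- The lower limit `sup { inf {f k : k ≥ n} : n ∈ ℕ }` of a sequence in `𝓡`. -/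
noncomputable def lowerLimit (f : ℕ → DecimalRep) : DecimalRep :=
  sup { z | ∃ n : ℕ, z = inf { w | ∃ k : ℕ, n ≤ k ∧ w = f k } }

end DecimalRep

/-!
Scaling the `k`-th truncation by `10 ^ k` identifies a decimal representation with an integer
sequence `n` satisfying `n (k + 1) / 10 = n k`, and turns `⪯` into the pointwise order. For a
nonempty bounded set, the termwise maxima of these sequences satisfy the same recursion, because
division by `10` is monotone and hence commutes with maxima; this gives the least upper bound
property. Applied to the sets defining `⊕`, it makes their suprema genuine, and these are compared
term by term.
-/

namespace DecimalRep

/-- The integer `10 ^ k * [x]_k`: the integer part of `x` with its first `k` digits appended. It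
replaces the rational truncations by integers, where bounded sets have maxima. -/
def scaledTrunc (x : DecimalRep) : ℕ → ℤ
  | 0 => x.1
  | k + 1 => 10 * scaledTrunc x k + (x.2 k : ℕ)

/-- The decimal representation with scaled truncations `n`; each digit is read off from the last
decimal digit of `n (k + 1)`, so this is meaningful only when `n (k + 1) / 10 = n k` for all `k`. -/
def ofScaledTrunc (n : ℕ → ℤ) : DecimalRep :=
  (n 0, fun k => ⟨(n (k + 1) % 10).toNat, by omega⟩)

theorem trunc_succ (x : DecimalRep) (k : ℕ) :
    trunc x (k + 1) = trunc x k + ((x.2 k : ℕ) : ℚ) / 10 ^ (k + 1) := by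
  simp only [trunc, Finset.sum_range_succ, add_assoc]

theorem trunc_eq_scaledTrunc_div (x : DecimalRep) (k : ℕ) :
    trunc x k = scaledTrunc x k / 10 ^ k := by
  induction k with
  | zero => simp [trunc, scaledTrunc]
  | succ k ih =>
    rw [trunc_succ, ih, scaledTrunc]
    push_cast
    field_simp
    ring

theorem le_iff_scaledTrunc_le {x y : DecimalRep} :
    le x y ↔ ∀ k, scaledTrunc x k ≤ scaledTrunc y k := by
  refine forall_congr' fun k => ?_
  rw [trunc_eq_scaledTrunc_div, trunc_eq_scaledTrunc_div,
    div_le_div_iff_of_pos_right (by positivity), Int.cast_le]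

theorem scaledTrunc_succ_ediv_ten (x : DecimalRep) (k : ℕ) :
    scaledTrunc x (k + 1) / 10 = scaledTrunc x k := by
  rw [scaledTrunc]
  omega

theorem scaledTrunc_ofScaledTrunc {n : ℕ → ℤ} (hn : ∀ k, n (k + 1) / 10 = n k) (k : ℕ) :
    scaledTrunc (ofScaledTrunc n) k = n k := by
  induction k with
  | zero => rfl
  | succ k ih =>
    have hdigit : (((ofScaledTrunc n).2 k : ℕ) : ℤ) = n (k + 1) % 10 :=
      Int.toNat_of_nonneg (Int.emod_nonneg _ (by norm_num))
    rw [scaledTrunc, ih, hdigit, ← hn k, Int.mul_ediv_add_emod]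

theorem iota_eq_ofScaledTrunc (α : ℚ) : iota α = ofScaledTrunc fun k => ⌊α * 10 ^ k⌋ := by
  simp [iota, ofScaledTrunc]

theorem scaledTrunc_iota (α : ℚ) (k : ℕ) : scaledTrunc (iota α) k = ⌊α * 10 ^ k⌋ := by
  rw [iota_eq_ofScaledTrunc]
  refine scaledTrunc_ofScaledTrunc (fun j => ?_) k
  rw [pow_succ, ← mul_assoc]
  exact Int.mul_natCast_floor_div_cancel (n := 10) (by norm_num) _

theorem iota_le_iota {α β : ℚ} (h : α ≤ β) : le (iota α) (iota β) := by
  refine le_iff_scaledTrunc_le.2 fun k => ?_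
  rw [scaledTrunc_iota, scaledTrunc_iota]
  gcongr

theorem scaledTrunc_lt (x : DecimalRep) (k : ℕ) : scaledTrunc x k < (x.1 + 1) * 10 ^ k := by
  induction k with
  | zero => simp [scaledTrunc]
  | succ k ih =>
    rw [scaledTrunc, pow_succ, ← mul_assoc]
    omega

theorem trunc_lt (x : DecimalRep) (k : ℕ) : trunc x k < x.1 + 1 := by
  rw [trunc_eq_scaledTrunc_div, div_lt_iff₀ (by positivity)]
  exact_mod_cast scaledTrunc_lt x k

theorem le.trans {x y z : DecimalRep} (hxy : le x y) (hyz : le y z) : le x z :=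
  fun k => (hxy k).trans (hyz k)

theorem exists_isLub {W : Set DecimalRep} (hne : W.Nonempty) (hbdd : ∃ B, ∀ w ∈ W, le w B) :
    ∃ M, IsLub W M := by
  obtain ⟨B, hB⟩ := hbdd
  have hmax (k : ℕ) : ∃ m, IsGreatest ((scaledTrunc · k) '' W) m :=
    BddAbove.exists_isGreatest_of_nonempty
      ⟨scaledTrunc B k, Set.forall_mem_image.2 fun w hw => le_iff_scaledTrunc_le.1 (hB w hw) k⟩
      (hne.image _)
  choose m hm using hmax
  have hdiv (k : ℕ) : m (k + 1) / 10 = m k := by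
    have hmono : Monotone fun a : ℤ => a / 10 := fun _ _ h => Int.ediv_le_ediv (by norm_num) h
    have hgreatest := hmono.map_isGreatest (hm (k + 1))
    simp only [Set.image_image, scaledTrunc_succ_ediv_ten] at hgreatest
    exact hgreatest.unique (hm k)
  refine ⟨ofScaledTrunc m, fun w hw => le_iff_scaledTrunc_le.2 fun k => ?_,
    fun M' hM' => le_iff_scaledTrunc_le.2 fun k => ?_⟩ <;>
    rw [scaledTrunc_ofScaledTrunc hdiv]
  · exact (hm k).2 (Set.mem_image_of_mem _ hw)
  · obtain ⟨w, hw, hwm⟩ := (hm k).1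
    exact hwm.symm.le.trans (le_iff_scaledTrunc_le.1 (hM' w hw) k)

theorem isLub_sup {W : Set DecimalRep} (hne : W.Nonempty) (hbdd : ∃ B, ∀ w ∈ W, le w B) :
    IsLub W (sup W) := by
  have hlub := exists_isLub hne hbdd
  rw [sup, dif_pos hlub]
  exact hlub.choose_spec

theorem isLub_add (x y : DecimalRep) :
    IsLub {z | ∃ k : ℕ, z = iota (trunc x k + trunc y k)} (add x y) := by
  refine isLub_sup ⟨_, 0, rfl⟩ ⟨iota ((x.1 + 1) + (y.1 + 1)), ?_⟩
  rintro _ ⟨k, rfl⟩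
  exact iota_le_iota (add_le_add (trunc_lt x k).le (trunc_lt y k).le)

theorem iota_trunc_add_trunc_le_add (x y : DecimalRep) (k : ℕ) :
    le (iota (trunc x k + trunc y k)) (add x y) :=
  (isLub_add x y).1 _ ⟨k, rfl⟩

theorem add_le {x y M : DecimalRep} (h : ∀ k, le (iota (trunc x k + trunc y k)) M) :
    le (add x y) M := by
  refine (isLub_add x y).2 M ?_
  rintro _ ⟨k, rfl⟩
  exact h k

end DecimalRep

open DecimalRep in
/-- Addition on `𝓡` preserves the order `⪯`. -/
theorem decimal_add_le_add (x y z w : DecimalRep) (hxz : le x z) (hyw : le y w) :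
    le (add x y) (add z w) :=
  add_le fun k => (iota_le_iota (add_le_add (hxz k) (hyw k))).trans
    (iota_trunc_add_trunc_le_add z w k)
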